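/- Let A be a real symmetric positive definite n×n matrix with smallest eigenvalue λ_min > 0 and largest eigenvalue λ_max, and set κ = λ_max/λ_min. Let b ∈ ℝⁿ, x₀ ∈ ℝⁿ, r₀ = b − Ax₀, x* = A⁻¹b, and for each k let x_k be the minimizer of the energy norm ‖x − x*‖_A over the affine Krylov space x₀ + K_k(A, r₀) with K_k(A, r₀) = span{r₀, Ar₀, …, A^{k−1}r₀}. Then the error e_k = x_k − x* satisfies ‖e_k‖_A ≤ 2·((√κ − 1)/(√κ + 1))^k · ‖e₀‖_A, where e₀ = x₀ − x* and ‖v‖_A = √(vᵀAv). -/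

import Mathlib

open Matrix

lemma cg_poly (k : ℕ) (a c : ℝ) (ha : 0 < a) (hac : a ≤ c) :
    ∃ p : Polynomial ℝ, p.natDegree ≤ k ∧ p.coeff 0 = 1 ∧
      ∀ t, a ≤ t → t ≤ c → |p.eval t| ≤
        2 * ((Real.sqrt (c / a) - 1) / (Real.sqrt (c / a) + 1)) ^ k := by
  rcases hac.eq_or_lt with rfl | hlt
  · refine ⟨(1 - Polynomial.C (1 / a) * Polynomial.X) ^ k, ?_, ?_, ?_⟩
    · refine Polynomial.natDegree_pow_le.trans ?_
      have : (1 - Polynomial.C (1 / a) * Polynomial.X : Polynomial ℝ).natDegree ≤ 1 := by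
        compute_degree
      nlinarith
    · rw [Polynomial.coeff_zero_eq_eval_zero]; simp
    · intro t h1 h2
      have : t = a := le_antisymm h2 h1
      subst this
      have h0 : t ≠ 0 := ha.ne'
      simp only [Polynomial.eval_pow, Polynomial.eval_sub, Polynomial.eval_one,
        Polynomial.eval_mul, Polynomial.eval_C, Polynomial.eval_X]
      rw [div_self h0, one_div_mul_cancel h0]
      rcases k with _ | k <;> simp
  · set s := Real.sqrt (c / a) with hs
    have hs2 : s ^ 2 = c / a := Real.sq_sqrt (div_nonneg (ha.le.trans hac) ha.le)
    have hs0 : 0 ≤ s := Real.sqrt_nonneg _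
    have hs1 : 1 < s := by
      have : 1 < c / a := (one_lt_div ha).2 hlt
      nlinarith
    have hc : c = s ^ 2 * a := by rw [hs2]; field_simp
    set q := (s - 1) / (s + 1) with hq
    have hq0 : 0 < q := div_pos (by linarith) (by linarith)
    have hca : 0 < c - a := by linarith
    set L : Polynomial ℝ := Polynomial.C ((c + a) / (c - a)) -
      Polynomial.C (2 / (c - a)) * Polynomial.X with hL
    have hLd : L.natDegree ≤ 1 := by rw [hL]; compute_degree
    have hLe : ∀ t, L.eval t = (c + a - 2 * t) / (c - a) := by
      intro t; simp [hL]; ring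
    have hx0 : (c + a) / (c - a) = Real.cosh (Real.log q) := by
      rw [Real.cosh_log hq0, hq, hc]
      have h1 : s - 1 ≠ 0 := by linarith
      have h2 : s + 1 ≠ 0 := by linarith
      have h3 : s ^ 2 * a - a ≠ 0 := by rw [← hc]; exact hca.ne'
      rw [inv_div, div_eq_iff h3]
      field_simp
      ring
    set τ := (Polynomial.Chebyshev.T ℝ k).eval ((c + a) / (c - a)) with hτ
    have hτe : τ = (q ^ k + (q ^ k)⁻¹) / 2 := by
      rw [hτ, hx0, Polynomial.Chebyshev.T_real_cosh]
      have : ((k : ℤ) : ℝ) * Real.log q = Real.log (q ^ k) := by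
        rw [Real.log_pow]; simp
      rw [this, Real.cosh_log (by positivity)]
    have hqk : 0 < q ^ k := by positivity
    have hτ0 : 0 < τ := by rw [hτe]; positivity
    refine ⟨Polynomial.C (1 / τ) * (Polynomial.Chebyshev.T ℝ k).comp L, ?_, ?_, ?_⟩
    · refine (Polynomial.natDegree_C_mul_le _ _).trans ?_
      rw [Polynomial.natDegree_comp, Polynomial.Chebyshev.natDegree_T]
      simp only [Int.natAbs_natCast]
      nlinarith
    · rw [Polynomial.coeff_zero_eq_eval_zero]
      simp only [Polynomial.eval_mul, Polynomial.eval_C, Polynomial.eval_comp, hLe]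
      rw [mul_zero, sub_zero, ← hτ, one_div_mul_cancel hτ0.ne']
    · intro t h1 h2
      simp only [Polynomial.eval_mul, Polynomial.eval_C, Polynomial.eval_comp, hLe]
      rw [abs_mul, abs_of_pos (by positivity)]
      have hT : |(Polynomial.Chebyshev.T ℝ k).eval ((c + a - 2 * t) / (c - a))| ≤ 1 := by
        apply Polynomial.Chebyshev.abs_eval_T_real_le_one
        rw [abs_le, le_div_iff₀ hca, div_le_iff₀ hca]
        constructor <;> linarith
      have hb : 1 / τ ≤ 2 * q ^ k := by
        rw [div_le_iff₀ hτ0, hτe]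
        have := mul_inv_cancel₀ hqk.ne'
        nlinarith
      calc 1 / τ * _ ≤ 1 / τ * 1 := by gcongr
        _ ≤ _ := by linarith

open scoped MatrixOrder in
lemma cg_energy {n : ℕ} (A : Matrix (Fin n) (Fin n) ℝ) (hA : A.IsHermitian)
    (p : Polynomial ℝ) (M : ℝ)
    (h0 : ∀ i, 0 ≤ hA.eigenvalues i)
    (h : ∀ i, |p.eval (hA.eigenvalues i)| ≤ M) (e : Fin n → ℝ) :
    (Polynomial.aeval A p *ᵥ e) ⬝ᵥ A *ᵥ (Polynomial.aeval A p *ᵥ e) ≤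
      M ^ 2 * (e ⬝ᵥ A *ᵥ e) := by
  have hsa : IsSelfAdjoint A := hA
  have key : 0 ≤ cfc (Polynomial.C (M ^ 2) * Polynomial.X -
      p * Polynomial.X * p : Polynomial ℝ).eval A := by
    apply cfc_nonneg
    intro x hx
    rw [hA.spectrum_real_eq_range_eigenvalues] at hx
    obtain ⟨i, rfl⟩ := hx
    have h1 := h i
    have h2 := pow_le_pow_left₀ (abs_nonneg _) h1 2
    rw [sq_abs] at h2
    simp only [Polynomial.eval_sub, Polynomial.eval_mul, Polynomial.eval_C, Polynomial.eval_X]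
    nlinarith [mul_le_mul_of_nonneg_right h2 (h0 i)]
  rw [cfc_polynomial _ A hsa, Matrix.nonneg_iff_posSemidef] at key
  have hk := key.dotProduct_mulVec_nonneg e
  simp only [map_sub, map_mul, Polynomial.aeval_X, Polynomial.aeval_C, star_trivial,
    Matrix.sub_mulVec, dotProduct_sub, ← Matrix.mulVec_mulVec, Algebra.algebraMap_eq_smul_one, Matrix.smul_mulVec, Matrix.one_mulVec,
    dotProduct_smul, smul_eq_mul] at hk
  have hT : (Polynomial.aeval A p)ᵀ = Polynomial.aeval A p := by
    have : IsSelfAdjoint (Polynomial.aeval A p) := by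
      rw [← cfc_polynomial p A hsa]; exact cfc_predicate _ _
    simpa [IsSelfAdjoint, Matrix.star_eq_conjTranspose] using this
  rw [Matrix.dotProduct_mulVec e (Polynomial.aeval A p), ← Matrix.mulVec_transpose, hT] at hk
  linarith

/-- Classical conjugate gradient convergence bound: if `A` is real symmetric positive
definite with smallest eigenvalue `λmin > 0` and largest eigenvalue `λmax`,
`κ = λmax/λmin`, `x* = A⁻¹ b`, `r₀ = b - A x₀`, and `x_k` minimizes the energy norm
`‖x - x*‖_A` over the affine Krylov space `x₀ + K_k(A, r₀)`, then
`‖x_k - x*‖_A ≤ 2 ((√κ - 1)/(√κ + 1))^k ‖x₀ - x*‖_A`. -/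
theorem cg_energy_norm_convergence
    (n k : ℕ) (A : Matrix (Fin n) (Fin n) ℝ)
    (hA : A.IsHermitian)
    (hpd : ∀ x : Fin n → ℝ, x ≠ 0 → 0 < x ⬝ᵥ A.mulVec x)
    (lmin lmax : ℝ) (hlmin : 0 < lmin)
    (hmin : IsLeast (Set.range hA.eigenvalues) lmin)
    (hmax : IsGreatest (Set.range hA.eigenvalues) lmax)
    (b x₀ : Fin n → ℝ)
    (r₀ : Fin n → ℝ) (hr₀ : r₀ = b - A.mulVec x₀)
    (xs : Fin n → ℝ) (hxs : xs = A⁻¹.mulVec b)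
    (xk : Fin n → ℝ)
    (hxk_mem : xk - x₀ ∈
      Submodule.span ℝ (Set.range fun i : Fin k => (A ^ (i : ℕ)).mulVec r₀))
    (hxk_min : ∀ x : Fin n → ℝ,
      x - x₀ ∈ Submodule.span ℝ (Set.range fun i : Fin k => (A ^ (i : ℕ)).mulVec r₀) →
      Real.sqrt ((xk - xs) ⬝ᵥ A.mulVec (xk - xs)) ≤
        Real.sqrt ((x - xs) ⬝ᵥ A.mulVec (x - xs))) :
    Real.sqrt ((xk - xs) ⬝ᵥ A.mulVec (xk - xs)) ≤
      2 * ((Real.sqrt (lmax / lmin) - 1) / (Real.sqrt (lmax / lmin) + 1)) ^ k *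
        Real.sqrt ((x₀ - xs) ⬝ᵥ A.mulVec (x₀ - xs)) := by
  have hb : ∀ i, lmin ≤ hA.eigenvalues i ∧ hA.eigenvalues i ≤ lmax := fun i =>
    ⟨hmin.2 ⟨i, rfl⟩, hmax.2 ⟨i, rfl⟩⟩
  obtain ⟨i₀, _⟩ := hmin.1
  have hll : lmin ≤ lmax := (hb i₀).1.trans (hb i₀).2
  obtain ⟨p, hpd1, hp0, hpb⟩ := cg_poly k lmin lmax hlmin hll
  set M := 2 * ((Real.sqrt (lmax / lmin) - 1) / (Real.sqrt (lmax / lmin) + 1)) ^ k with hM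
  have hM0 : 0 ≤ M := (abs_nonneg _).trans (hpb lmin le_rfl hll)
  have hen := cg_energy A hA p M (fun i => hlmin.le.trans (hb i).1)
    (fun i => hpb _ (hb i).1 (hb i).2) (x₀ - xs)
  have hdet : IsUnit A.det := by
    have : A.PosDef := Matrix.PosDef.of_dotProduct_mulVec_pos hA
      (fun {x} hx => by simpa using hpd x hx)
    exact isUnit_iff_ne_zero.2 this.det_pos.ne'
  have hAxs : A *ᵥ xs = b := by
    rw [hxs, Matrix.mulVec_mulVec, Matrix.mul_nonsing_inv _ hdet, Matrix.one_mulVec]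
  have hAe : A *ᵥ (x₀ - xs) = -r₀ := by
    rw [Matrix.mulVec_sub, hAxs, hr₀]; abel
  have hexp : Polynomial.aeval A p *ᵥ (x₀ - xs) =
      (∑ i ∈ Finset.range k, -p.coeff (i + 1) • (A ^ i *ᵥ r₀)) + (x₀ - xs) := by
    rw [Polynomial.aeval_eq_sum_range' (Nat.lt_succ_of_le hpd1), Finset.sum_range_succ', hp0,
      Matrix.add_mulVec, Matrix.sum_mulVec]
    congr 1
    · refine Finset.sum_congr rfl fun i _ => ?_
      rw [Matrix.smul_mulVec, pow_succ, ← Matrix.mulVec_mulVec, hAe, Matrix.mulVec_neg,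
        smul_neg, neg_smul]
    · simp
  have hmem := hxk_min (xs + Polynomial.aeval A p *ᵥ (x₀ - xs)) (by
    rw [hexp]
    have : xs + ((∑ i ∈ Finset.range k, -p.coeff (i + 1) • (A ^ i *ᵥ r₀)) + (x₀ - xs)) - x₀ =
      ∑ i ∈ Finset.range k, -p.coeff (i + 1) • (A ^ i *ᵥ r₀) := by abel
    rw [this]
    refine Submodule.sum_mem _ fun i hi => Submodule.smul_mem _ _ (Submodule.subset_span ?_)
    exact ⟨⟨i, Finset.mem_range.1 hi⟩, rfl⟩)
  rw [add_sub_cancel_left] at hmem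
  refine hmem.trans ((Real.sqrt_le_sqrt hen).trans ?_)
  rw [Real.sqrt_mul (sq_nonneg M), Real.sqrt_sq hM0]
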